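/- Hyper-solutions transport polynomial-like: let F ∈ ℂ[Z,Y,X], f ∈ ℂ[X], and x₀ ∈ ℂ. If A divides H_{F,f} in ℂ[X,A] (i.e. f is a hyper-solution of F), then A divides H_{F_{x₀},f_{x₀}} in ℂ[X,A], where F_{x₀}(Z,Y,X) := F(Z,Y,X+x₀) and f_{x₀}(X) := f(X+x₀); that is, f_{x₀} is a hyper-solution of the transported differential equation F_{x₀}. -/

import Mathlib

open MvPolynomial Hyperreal

/-- The ring hom embedding `ℝ` into the hyperreals `ℝ*`. -/
noncomputable def realToHyper : ℝ →+* ℝ* where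
  toFun r := (r : ℝ*)
  map_one' := Hyperreal.coe_one
  map_mul' := Hyperreal.coe_mul
  map_zero' := Hyperreal.coe_zero
  map_add' := Hyperreal.coe_add

/-- `f(X+A)` as an element of `K[X,A]` (variable `0` is `X`, variable `1` is `A`). -/
noncomputable def shiftPoly {K : Type*} [CommSemiring K] (f : Polynomial K) :
    MvPolynomial (Fin 2) K :=
  Polynomial.aeval (MvPolynomial.X 0 + MvPolynomial.X 1) f

/-- `f(X)` as an element of `K[X,A]` (variable `0` is `X`, variable `1` is `A`). -/
noncomputable def injPoly {K : Type*} [CommSemiring K] (f : Polynomial K) :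
    MvPolynomial (Fin 2) K :=
  Polynomial.aeval (MvPolynomial.X 0) f

/-- `Q` is the difference-quotient polynomial of `f`, i.e. `A·Q = f(X+A) − f(X)` in `K[X,A]`. -/
def IsDiffQuot {K : Type*} [CommRing K] (f : Polynomial K) (Q : MvPolynomial (Fin 2) K) : Prop :=
  MvPolynomial.X 1 * Q = shiftPoly f - injPoly f

/-- The associated polynomial `H_{F,f} ∈ K[X,A]` of `F ∈ K[Z,Y,X]` (variables `Z = 0`, `Y = 1`,
`X = 2`) and `f ∈ K[X]`, given the difference-quotient polynomial `Q` of `f`: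
substitute `Z := Q`, `Y := f(X)`, `X := X`. -/
noncomputable def Hpoly {K : Type*} [CommRing K] (F : MvPolynomial (Fin 3) K) (f : Polynomial K)
    (Q : MvPolynomial (Fin 2) K) : MvPolynomial (Fin 2) K :=
  MvPolynomial.aeval ![Q, injPoly f, MvPolynomial.X 0] F

/-- The map `K[Z,Y,X] → K[Z,Y,X]` sending `F(Z,Y,X)` to `F_{x₀}(Z,Y,X) = F(Z,Y,X+x₀)`
(variables `Z = 0`, `Y = 1`, `X = 2`). -/
noncomputable def atPoint {K : Type*} [CommSemiring K] (x₀ : K) (F : MvPolynomial (Fin 3) K) :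
    MvPolynomial (Fin 3) K :=
  MvPolynomial.aeval
    ![MvPolynomial.X 0, MvPolynomial.X 1, MvPolynomial.X 2 + MvPolynomial.C x₀] F

/-!
Translation `X ↦ X + x₀`, `A ↦ A` is a ring endomorphism of `K[X,A]` fixing `A`. As `A` is not a
zero divisor, difference quotients are unique, so translation sends `Q_f` to `Q_{f_{x₀}}` and hence
`H_{F,f}` to `H_{F_{x₀},f_{x₀}}`; a ring homomorphism fixing `A` preserves divisibility by `A`.
-/

section Translation

variable {K : Type*} [CommSemiring K]

/-- The translation `X ↦ X + x₀`, `A ↦ A` of `K[X,A]`; it carries the polynomials attached to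
`(F, f)` to those attached to `(F_{x₀}, f_{x₀})`. -/
noncomputable def translateX (x₀ : K) : MvPolynomial (Fin 2) K →ₐ[K] MvPolynomial (Fin 2) K :=
  aeval ![X 0 + C x₀, X 1]

@[simp]
theorem translateX_X_zero (x₀ : K) : translateX x₀ (X 0) = X 0 + C x₀ := by
  simp [translateX]

@[simp]
theorem translateX_X_one (x₀ : K) : translateX x₀ (X 1) = X 1 := by
  simp [translateX]

theorem translateX_injPoly (x₀ : K) (f : Polynomial K) :
    translateX x₀ (injPoly f) = injPoly (f.comp (Polynomial.X + Polynomial.C x₀)) := by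
  simp [injPoly, ← Polynomial.aeval_algHom_apply, Polynomial.aeval_comp, algebraMap_eq]

theorem translateX_shiftPoly (x₀ : K) (f : Polynomial K) :
    translateX x₀ (shiftPoly f) = shiftPoly (f.comp (Polynomial.X + Polynomial.C x₀)) := by
  simp [shiftPoly, ← Polynomial.aeval_algHom_apply, Polynomial.aeval_comp, algebraMap_eq,
    add_right_comm]

end Translation

section HyperSolution

variable {K : Type*} [CommRing K]

theorem IsDiffQuot.unique {f : Polynomial K} {Q Q' : MvPolynomial (Fin 2) K}
    (hQ : IsDiffQuot f Q) (hQ' : IsDiffQuot f Q') : Q = Q' :=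
  X_mul_cancel_left_iff.mp (hQ.trans hQ'.symm)

theorem IsDiffQuot.comp_X_add_C {f : Polynomial K} {Q : MvPolynomial (Fin 2) K}
    (hQ : IsDiffQuot f Q) (x₀ : K) :
    IsDiffQuot (f.comp (Polynomial.X + Polynomial.C x₀)) (translateX x₀ Q) := by
  have h := congrArg (translateX x₀) hQ
  rwa [map_mul, map_sub, translateX_X_one, translateX_shiftPoly, translateX_injPoly] at h

theorem translateX_Hpoly (x₀ : K) (F : MvPolynomial (Fin 3) K) (f : Polynomial K)
    (Q : MvPolynomial (Fin 2) K) :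
    translateX x₀ (Hpoly F f Q) =
      Hpoly (atPoint x₀ F) (f.comp (Polynomial.X + Polynomial.C x₀)) (translateX x₀ Q) := by
  unfold Hpoly atPoint
  rw [← AlgHom.comp_apply, ← AlgHom.comp_apply]
  congr 1
  ext i : 1
  fin_cases i <;> simp [translateX_injPoly, algebraMap_eq]

theorem stmt_7_general (F : MvPolynomial (Fin 3) K) (f : Polynomial K) (x₀ : K)
    (Q Q' : MvPolynomial (Fin 2) K) (hQ : IsDiffQuot f Q)
    (hQ' : IsDiffQuot (f.comp (Polynomial.X + Polynomial.C x₀)) Q')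
    (hdvd : X 1 ∣ Hpoly F f Q) :
    X 1 ∣ Hpoly (atPoint x₀ F) (f.comp (Polynomial.X + Polynomial.C x₀)) Q' := by
  rw [hQ'.unique (hQ.comp_X_add_C x₀), ← translateX_Hpoly]
  simpa only [translateX_X_one] using map_dvd (translateX x₀) hdvd

end HyperSolution

/-- Hyper-solutions transport polynomial-like: if `A ∣ H_{F,f}`, then
`A ∣ H_{F_{x₀}, f_{x₀}}`, where `F_{x₀}(Z,Y,X) = F(Z,Y,X+x₀)` and `f_{x₀}(X) = f(X+x₀)`. -/
theorem stmt_7 (F : MvPolynomial (Fin 3) ℂ) (f : Polynomial ℂ) (x₀ : ℂ)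
    (Q Q' : MvPolynomial (Fin 2) ℂ) (hQ : IsDiffQuot f Q)
    (hQ' : IsDiffQuot (f.comp (Polynomial.X + Polynomial.C x₀)) Q')
    (hdvd : MvPolynomial.X 1 ∣ Hpoly F f Q) :
    MvPolynomial.X 1 ∣ Hpoly (atPoint x₀ F) (f.comp (Polynomial.X + Polynomial.C x₀)) Q' :=
  stmt_7_general F f x₀ Q Q' hQ hQ' hdvd
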